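/- For every integer q ≥ 2, the number of conjugacy classes of elements of order q in the group PL^+(S^1) of orientation-preserving piecewise affine homeomorphisms of the circle S^1 = ℝ/ℤ is exactly φ(q), where φ is Euler's totient function. -/

import Mathlib

/-!
The classes are counted by the elements `u` of order `q` in `ℝ/ℤ`, of which there are `φ(q)`:
`u` corresponds to the class of the rotation by `u`.

*Every class contains a rotation* (`exists_conj_rotation`). Let `F` be a lift of `f`, where `f` has
order `q`. Then `F^q` lifts the identity, so `F^q = id + p` for an integer `p`. The average
`H(x) = (1/q) ∑_{i<q} (F^i(x) - i p/q)` satisfies `H ∘ F = H + p/q`, is increasing and commutes with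
the translation by `1`. It is piecewise affine, because having affine one-sided germs is stable under
sums and under composition with increasing continuous maps, and by compactness of `[0, 1]` a
function with affine one-sided germs is affine on the pieces of a finite subdivision
(`exists_subdivision`). So `H` induces a conjugacy in `PL⁺(S¹)` from `f` to the rotation by `p/q`.

*Different rotations are not conjugate*. The property that `f` has an increasing degree one lift `F` with
`F^q = id + p` and `p/q = t` in `ℝ/ℤ` (`HasRot q t f`) is invariant under conjugation
(`HasRot.conj`), and the rotation by `u` has it only for `t = u` (`hasRot_rotation`).
-/

open Filter Topology

/-- `F : ℝ → ℝ` is a lift of an orientation-preserving piecewise affine homeomorphism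
from the circle `ℝ/rℤ` to the circle `ℝ/r'ℤ`: it is strictly increasing, commutes
appropriately with the translations, and is affine on the pieces of a finite
subdivision `0 = a₀ < a₁ < ... < aₙ = r` of `[0, r]`. -/
def IsPLLift (r r' : ℝ) (F : ℝ → ℝ) : Prop :=
  StrictMono F ∧ (∀ x : ℝ, F (x + r) = F x + r') ∧
    ∃ (n : ℕ) (a : Fin (n + 1) → ℝ),
      StrictMono a ∧ a 0 = 0 ∧ a (Fin.last n) = r ∧
      ∀ i : Fin n, ∃ (lam β : ℝ),
        ∀ x ∈ Set.Icc (a i.castSucc) (a i.succ), F x = lam * x + β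

/-- Membership in the group `PL⁺(S¹)` of orientation-preserving piecewise affine
homeomorphisms of the circle `S¹ = ℝ/ℤ`, viewed inside the permutations of `ℝ/ℤ`. -/
def InPL (f : Equiv.Perm (AddCircle (1 : ℝ))) : Prop :=
  ∃ F : ℝ → ℝ, IsPLLift 1 1 F ∧ ∀ x : ℝ, f ↑x = ↑(F x)

/-! ### Increasing maps of degree one and the circle maps they induce -/

theorem coe_circle_eq_iff (x y : ℝ) :
    (x : AddCircle (1 : ℝ)) = y ↔ ∃ n : ℤ, x = y + n := by
  rw [← sub_eq_zero, ← AddCircle.coe_sub, AddCircle.coe_eq_zero_iff]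
  constructor
  · rintro ⟨n, hn⟩
    refine ⟨n, ?_⟩
    simp at hn
    linarith
  · rintro ⟨n, hn⟩
    refine ⟨n, ?_⟩
    simp [hn]

theorem deg_one_add_int {F : ℝ → ℝ} (hF : StrictMono F) (h1 : ∀ x, F (x + 1) = F x + 1)
    (x : ℝ) (n : ℤ) : F (x + n) = F x + n :=
  CircleDeg1Lift.map_add_int ⟨⟨F, hF.monotone⟩, h1⟩ x n

theorem deg_one_iterate {F : ℝ → ℝ} (h1 : ∀ x, F (x + 1) = F x + 1) (i : ℕ) (x : ℝ) :
    F^[i] (x + 1) = F^[i] x + 1 := by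
  induction i generalizing x with
  | zero => rfl
  | succ i ih => rw [Function.iterate_succ_apply, h1, ih, Function.iterate_succ_apply]

/-- An increasing degree one lift of a rotation is a translation: the integer by which it differs
from a fixed lift cannot jump. -/
theorem lift_rotation {F : ℝ → ℝ} (hF : StrictMono F) (h1 : ∀ x, F (x + 1) = F x + 1) (c : ℝ)
    (h : ∀ x : ℝ, (F x : AddCircle (1 : ℝ)) = ((x + c : ℝ) : AddCircle (1 : ℝ))) :
    ∃ k : ℤ, ∀ x, F x = x + (c + k) := by
  simp only [coe_circle_eq_iff] at h
  choose k hk using h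
  refine ⟨k 0, fun x => ?_⟩
  have key : ∀ y : ℝ, 0 ≤ y → y < 1 → k y = k 0 := by
    intro y hy0 hy1
    have e1 : F 0 ≤ F y := hF.monotone hy0
    have e2 : F y < F 0 + 1 := by
      have := hF hy1
      rwa [← zero_add (1 : ℝ), h1] at this
    rw [hk 0, hk y] at e1 e2
    have e3 : ((k y : ℤ) : ℝ) < k 0 + 1 := by linarith
    have e4 : ((k 0 : ℤ) : ℝ) < k y + 1 := by linarith
    norm_cast at e3 e4
    omega
  have h2 := deg_one_add_int hF h1 (Int.fract x) ⌊x⌋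
  rw [Int.fract_add_floor, hk (Int.fract x), key _ (Int.fract_nonneg x) (Int.fract_lt_one x)] at h2
  rw [h2]
  linarith [Int.fract_add_floor x]

theorem lift_iterate {f : Equiv.Perm (AddCircle (1 : ℝ))} {F : ℝ → ℝ}
    (h : ∀ x : ℝ, f ↑x = ↑(F x)) (n : ℕ) (x : ℝ) :
    (f ^ n) (x : AddCircle (1 : ℝ)) = ((F^[n] x : ℝ) : AddCircle (1 : ℝ)) := by
  induction n generalizing x with
  | zero => simp
  | succ n ih => rw [pow_succ, Equiv.Perm.mul_apply, h, ih, Function.iterate_succ_apply]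

theorem lift_surjective {f : Equiv.Perm (AddCircle (1 : ℝ))} {F : ℝ → ℝ} (hF : StrictMono F)
    (h1 : ∀ x, F (x + 1) = F x + 1) (h : ∀ x : ℝ, f ↑x = ↑(F x)) : Function.Surjective F := by
  intro y
  obtain ⟨u, hu⟩ := f.surjective (y : AddCircle (1 : ℝ))
  obtain ⟨x, rfl⟩ := QuotientAddGroup.mk_surjective u
  have hx : ((F x : ℝ) : AddCircle (1 : ℝ)) = y := (h x).symm.trans hu
  obtain ⟨n, hn⟩ := (coe_circle_eq_iff _ _).1 hx
  refine ⟨x + (-n : ℤ), ?_⟩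
  rw [deg_one_add_int hF h1, hn]
  push_cast
  ring

theorem exists_perm_of_lift {H : ℝ → ℝ} (hH : StrictMono H) (h1 : ∀ x, H (x + 1) = H x + 1)
    (hs : Function.Surjective H) :
    ∃ h : Equiv.Perm (AddCircle (1 : ℝ)), ∀ x : ℝ, h ↑x = ↑(H x) := by
  have hper : Function.Periodic (fun x : ℝ => ((H x : ℝ) : AddCircle (1 : ℝ))) 1 := by
    intro x
    simp only [h1]
    exact (coe_circle_eq_iff _ _).2 ⟨1, by simp⟩
  have hb : Function.Bijective (hper.lift : AddCircle (1 : ℝ) → AddCircle (1 : ℝ)) := by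
    constructor
    · intro u v huv
      obtain ⟨x, rfl⟩ := QuotientAddGroup.mk_surjective u
      obtain ⟨y, rfl⟩ := QuotientAddGroup.mk_surjective v
      obtain ⟨n, hn⟩ := (coe_circle_eq_iff (H x) (H y)).1 huv
      rw [← deg_one_add_int hH h1] at hn
      exact (coe_circle_eq_iff x y).2 ⟨n, hH.injective hn⟩
    · intro v
      obtain ⟨y, rfl⟩ := QuotientAddGroup.mk_surjective v
      obtain ⟨x, rfl⟩ := hs y
      exact ⟨(x : AddCircle (1 : ℝ)), rfl⟩
  exact ⟨Equiv.ofBijective _ hb, fun x => rfl⟩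

/-! ### Affine germs -/

/-- `F` coincides with an affine function along the filter `l`. It is used for `l = 𝓝[≥] x` and
`l = 𝓝[≤] x`, where it says that the right or left germ of `F` at `x`, value at `x` included, is
affine. -/
def AffGerm (l : Filter ℝ) (F : ℝ → ℝ) : Prop :=
  ∃ lam β : ℝ, ∀ᶠ y in l, F y = lam * y + β

theorem AffGerm.comp {l l' : Filter ℝ} {F G : ℝ → ℝ} (hG : AffGerm l' G) (hF : AffGerm l F)
    (h : Tendsto F l l') : AffGerm l (G ∘ F) := by
  obtain ⟨a, b, hF⟩ := hF
  obtain ⟨c, d, hG⟩ := hG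
  refine ⟨c * a, c * b + d, ?_⟩
  filter_upwards [hF, h.eventually hG] with y h1 h2
  rw [Function.comp_apply, h2, h1]
  ring

theorem AffGerm.add {l : Filter ℝ} {F G : ℝ → ℝ} (hF : AffGerm l F) (hG : AffGerm l G) :
    AffGerm l (fun x => F x + G x) := by
  obtain ⟨a, b, hF⟩ := hF
  obtain ⟨c, d, hG⟩ := hG
  refine ⟨a + c, b + d, ?_⟩
  filter_upwards [hF, hG] with y h1 h2
  rw [h2, h1]
  ring

theorem affGerm_affine (l : Filter ℝ) (a b : ℝ) : AffGerm l (fun x => a * x + b) :=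
  ⟨a, b, Eventually.of_forall fun _ => rfl⟩

theorem AffGerm.sum {l : Filter ℝ} {F : ℕ → ℝ → ℝ} (hF : ∀ i, AffGerm l (F i)) (n : ℕ) :
    AffGerm l (fun x => ∑ i ∈ Finset.range n, F i x) := by
  induction n with
  | zero => simpa using affGerm_affine l 0 0
  | succ n ih => simpa only [Finset.sum_range_succ] using ih.add (hF n)

/-- `F` is piecewise affine near every point. -/
def LocPL (F : ℝ → ℝ) : Prop :=
  ∀ x, AffGerm (𝓝[≥] x) F ∧ AffGerm (𝓝[≤] x) F

theorem LocPL.comp {F G : ℝ → ℝ} (hG : LocPL G) (hF : LocPL F) (hm : Monotone F)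
    (hc : Continuous F) : LocPL (G ∘ F) := by
  intro x
  refine ⟨(hG (F x)).1.comp (hF x).1 ?_, (hG (F x)).2.comp (hF x).2 ?_⟩
  · exact (hc.continuousWithinAt).tendsto_nhdsWithin fun y hy => hm hy
  · exact (hc.continuousWithinAt).tendsto_nhdsWithin fun y hy => hm hy

theorem locPL_iterate {F : ℝ → ℝ} (hF : LocPL F) (hm : Monotone F) (hc : Continuous F) (i : ℕ) :
    LocPL F^[i] := by
  induction i with
  | zero =>
    have : ∀ l, AffGerm l F^[0] := fun l => ⟨1, 0, by simp⟩
    exact fun x => ⟨this _, this _⟩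
  | succ i ih => exact ih.comp hF hm hc

/-- In a subdivision every point to the right of the start lies in some half-open piece
`(a i, a (i + 1)]`. -/
theorem exists_piece_left (n : ℕ) (a : Fin (n + 1) → ℝ) (x : ℝ) (h0 : a 0 < x)
    (h1 : x ≤ a (Fin.last n)) : ∃ i : Fin n, a i.castSucc < x ∧ x ≤ a i.succ := by
  induction n with
  | zero => exact absurd h1 (not_le.2 h0)
  | succ n ih =>
    by_cases h : x ≤ a (Fin.last n).castSucc
    · obtain ⟨i, hi⟩ := ih (fun j => a j.castSucc) h0 h
      exact ⟨i.castSucc, hi⟩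
    · exact ⟨Fin.last n, not_le.1 h, h1⟩

theorem exists_piece_right (n : ℕ) (a : Fin (n + 1) → ℝ) (x : ℝ) (h0 : a 0 ≤ x)
    (h1 : x < a (Fin.last n)) : ∃ i : Fin n, a i.castSucc ≤ x ∧ x < a i.succ := by
  induction n with
  | zero => exact absurd h1 (not_lt.2 h0)
  | succ n ih =>
    by_cases h : x < a (Fin.last n).castSucc
    · obtain ⟨i, hi⟩ := ih (fun j => a j.castSucc) h0 h
      exact ⟨i.castSucc, hi⟩
    · exact ⟨Fin.last n, not_lt.1 h, h1⟩

/-- Affine germs can be transported along integer translations of a degree one map. -/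
theorem AffGerm.translate {F : ℝ → ℝ} (hF : StrictMono F) (h1 : ∀ x, F (x + 1) = F x + 1)
    {l l' : Filter ℝ} (n : ℤ) (h : AffGerm l' F) (ht : Tendsto (fun y : ℝ => y + n) l l') :
    AffGerm l F := by
  obtain ⟨a, b, h⟩ := h
  refine ⟨a, a * n + b - n, ?_⟩
  filter_upwards [ht.eventually h] with y hy
  rw [deg_one_add_int hF h1] at hy
  linarith

theorem IsPLLift.locPL {F : ℝ → ℝ} (hF : IsPLLift 1 1 F) : LocPL F := by
  obtain ⟨hm, h1, n, a, -, ha0, ha1, hp⟩ := hF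
  intro x
  constructor
  · have ht : Tendsto (fun y : ℝ => y + ((-⌊x⌋ : ℤ) : ℝ)) (𝓝[≥] x) (𝓝[≥] (x + ((-⌊x⌋ : ℤ) : ℝ))) :=
      (by fun_prop : Continuous fun y : ℝ => y + ((-⌊x⌋ : ℤ) : ℝ)).continuousWithinAt.tendsto_nhdsWithin
        fun y hy => by simpa using hy
    refine AffGerm.translate hm h1 _ ?_ ht
    obtain ⟨i, hi⟩ := exists_piece_right n a (x + ((-⌊x⌋ : ℤ) : ℝ))
      (by push_cast; linarith [Int.floor_le x]) (by push_cast; linarith [Int.lt_floor_add_one x])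
    obtain ⟨lam, β, hl⟩ := hp i
    refine ⟨lam, β, ?_⟩
    filter_upwards [Icc_mem_nhdsGE hi.2] with y hy
    exact hl y ⟨hi.1.trans hy.1, hy.2⟩
  · have ht : Tendsto (fun y : ℝ => y + ((1 - ⌈x⌉ : ℤ) : ℝ)) (𝓝[≤] x)
        (𝓝[≤] (x + ((1 - ⌈x⌉ : ℤ) : ℝ))) :=
      (by fun_prop : Continuous fun y : ℝ => y + ((1 - ⌈x⌉ : ℤ) : ℝ)).continuousWithinAt.tendsto_nhdsWithin
        fun y hy => by simpa using hy
    refine AffGerm.translate hm h1 _ ?_ ht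
    obtain ⟨i, hi⟩ := exists_piece_left n a (x + ((1 - ⌈x⌉ : ℤ) : ℝ))
      (by push_cast; linarith [Int.ceil_lt_add_one x]) (by push_cast; linarith [Int.le_ceil x])
    obtain ⟨lam, β, hl⟩ := hp i
    refine ⟨lam, β, ?_⟩
    filter_upwards [Icc_mem_nhdsLE hi.1] with y hy
    exact hl y ⟨hy.1, hy.2.trans hi.2⟩

/-- `[0, t]` has a finite subdivision on the pieces of which `F` is affine. -/
def HasSub (F : ℝ → ℝ) (t : ℝ) : Prop :=
  ∃ (n : ℕ) (a : Fin (n + 1) → ℝ),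
    StrictMono a ∧ a 0 = 0 ∧ a (Fin.last n) = t ∧
    ∀ i : Fin n, ∃ (lam β : ℝ),
      ∀ x ∈ Set.Icc (a i.castSucc) (a i.succ), F x = lam * x + β

theorem HasSub.extend {F : ℝ → ℝ} {s t : ℝ} (h : HasSub F s) (hst : s < t)
    (ha : ∃ lam β : ℝ, ∀ x ∈ Set.Icc s t, F x = lam * x + β) : HasSub F t := by
  obtain ⟨n, a, hm, h0, h1, hp⟩ := h
  refine ⟨n + 1, Fin.snoc (α := fun _ => ℝ) a t, ?_, ?_, ?_, ?_⟩
  · rw [Fin.strictMono_iff_lt_succ]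
    intro i
    induction i using Fin.lastCases with
    | last => simpa [h1] using hst
    | cast i =>
      rw [Fin.succ_castSucc, Fin.snoc_castSucc, Fin.snoc_castSucc]
      exact hm i.castSucc_lt_succ
  · rw [← Fin.castSucc_zero, Fin.snoc_castSucc, h0]
  · simp
  · intro i
    induction i using Fin.lastCases with
    | last => simpa [h1] using ha
    | cast i =>
      rw [Fin.succ_castSucc, Fin.snoc_castSucc, Fin.snoc_castSucc]
      exact hp i

/-- Compactness of `[0, 1]`: a locally piecewise affine function is piecewise affine on `[0, 1]`. -/
theorem exists_subdivision {F : ℝ → ℝ} (hF : LocPL F) : HasSub F 1 := by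
  let S : Set ℝ := {t | 0 ≤ t ∧ t ≤ 1 ∧ HasSub F t}
  have hS0 : (0 : ℝ) ∈ S :=
    ⟨le_rfl, zero_le_one, 0, fun _ => 0, fun i j h => by omega, rfl, rfl, fun i => i.elim0⟩
  have hbd : BddAbove S := ⟨1, fun t ht => ht.2.1⟩
  have hc0 : 0 ≤ sSup S := le_csSup hbd hS0
  have hc1 : sSup S ≤ 1 := csSup_le ⟨0, hS0⟩ fun t ht => ht.2.1
  -- The supremum is attained, by the affine germ on its left.
  have hcS : sSup S ∈ S := by
    obtain ⟨lam, β, h⟩ := (hF (sSup S)).2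
    obtain ⟨l, hl, hlc⟩ := mem_nhdsLE_iff_exists_Icc_subset.1 h
    obtain ⟨t, htS, hlt⟩ := exists_lt_of_lt_csSup ⟨0, hS0⟩ hl
    rcases (le_csSup hbd htS).eq_or_lt with he | hlt'
    · rwa [← he]
    · exact ⟨hc0, hc1, htS.2.2.extend hlt' ⟨lam, β, fun x hx => hlc ⟨hlt.le.trans hx.1, hx.2⟩⟩⟩
  -- It equals `1`, by the affine germ on its right.
  rcases hc1.eq_or_lt with he | hlt
  · rw [← he]
    exact hcS.2.2
  · exfalso
    obtain ⟨lam, β, h⟩ := (hF (sSup S)).1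
    obtain ⟨r, hr, hrc⟩ := mem_nhdsGE_iff_exists_Icc_subset.1 h
    have hmin : sSup S < min r 1 := lt_min hr hlt
    have : min r 1 ∈ S := ⟨hc0.trans hmin.le, min_le_right _ _, hcS.2.2.extend hmin
      ⟨lam, β, fun x hx => hrc ⟨hx.1, hx.2.trans (min_le_left _ _)⟩⟩⟩
    exact absurd (le_csSup hbd this) (not_le.2 hmin)

/-! ### Rotations -/

theorem inPL_rotation (u : AddCircle (1 : ℝ)) : InPL (Equiv.addRight u) := by
  obtain ⟨r, rfl⟩ := QuotientAddGroup.mk_surjective u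
  refine ⟨fun x => x + r, ⟨fun x y h => by simpa using h, fun x => by ring,
    exists_subdivision fun x => ?_⟩, fun x => rfl⟩
  exact ⟨by simpa using affGerm_affine _ 1 r, by simpa using affGerm_affine _ 1 r⟩

theorem rotation_pow (u : AddCircle (1 : ℝ)) (n : ℕ) :
    (Equiv.addRight u : Equiv.Perm (AddCircle (1 : ℝ))) ^ n = Equiv.addRight (n • u) := by
  induction n with
  | zero => ext x; simp
  | succ n ih =>
    ext x
    simp only [pow_succ, ih, Equiv.Perm.mul_apply, Equiv.coe_addRight, succ_nsmul', add_assoc]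

theorem orderOf_rotation (u : AddCircle (1 : ℝ)) :
    orderOf (Equiv.addRight u : Equiv.Perm (AddCircle (1 : ℝ))) = addOrderOf u := by
  rw [← orderOf_ofAdd_eq_addOrderOf]
  refine orderOf_eq_orderOf_iff.2 fun n => ?_
  rw [rotation_pow, ← ofAdd_nsmul, ofAdd_eq_one]
  constructor
  · intro h
    simpa using congrArg (fun e : Equiv.Perm (AddCircle (1 : ℝ)) => e 0) h
  · intro h
    rw [h]
    ext x
    simp

/-- Averaging over the iterates of a lift conjugates an element with trivial `q`-th power
to a rotation. -/
theorem exists_conj_rotation {q : ℕ} (hq : 0 < q) {f : Equiv.Perm (AddCircle (1 : ℝ))}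
    (hf : InPL f) (hfq : f ^ q = 1) :
    ∃ (u : AddCircle (1 : ℝ)) (h : Equiv.Perm (AddCircle (1 : ℝ))),
      InPL h ∧ h * f * h⁻¹ = Equiv.addRight u := by
  obtain ⟨F, hPL, hl⟩ := hf
  have hm := hPL.1
  have h1 := hPL.2.1
  have hcont : Continuous F := hm.monotone.continuous_of_surjective (lift_surjective hm h1 hl)
  have hq' : (0 : ℝ) < q := by exact_mod_cast hq
  obtain ⟨p, hp⟩ := lift_rotation (hm.iterate q) (deg_one_iterate h1 q) 0 (fun x => by
    rw [← lift_iterate hl, hfq]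
    simp)
  set c : ℝ := p / q with hc
  -- The trailing `+ 0` presents `H` as an affine map applied to the sum, as in `affGerm_affine`.
  let H : ℝ → ℝ := fun x => (q : ℝ)⁻¹ * (∑ i ∈ Finset.range q, (F^[i] x + -(i * c))) + 0
  have hHF : ∀ x, H (F x) = H x + c := by
    intro x
    have e1 : ∑ i ∈ Finset.range q, (F^[i] (F x) + -(i * c)) =
        ∑ i ∈ Finset.range q, (F^[i + 1] x + -((i + 1 : ℕ) * c)) + q * c := by
      rw [← nsmul_eq_mul, ← Finset.card_range q, ← Finset.sum_const, Finset.card_range,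
        ← Finset.sum_add_distrib]
      refine Finset.sum_congr rfl fun i _ => ?_
      rw [Function.iterate_succ_apply]
      push_cast
      ring
    -- Both sides compute the sum over `0 ≤ i ≤ q`; its two extreme terms agree as `F^q = id + p`.
    have e2 := Finset.sum_range_succ' (fun i : ℕ => F^[i] x + -(i * c)) q
    rw [Finset.sum_range_succ, hp] at e2
    have e3 : (q : ℝ) * c = p := by rw [hc]; field_simp
    have e4 : ∑ i ∈ Finset.range q, (F^[i] (F x) + -(i * c)) =
        ∑ i ∈ Finset.range q, (F^[i] x + -(i * c)) + q * c := by
      rw [e1]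
      simp only [Function.iterate_zero_apply, Nat.cast_zero, zero_mul] at e2
      linarith
    simp only [H, e4, mul_add, inv_mul_cancel_left₀ hq'.ne', add_zero]
  have hH1 : ∀ x, H (x + 1) = H x + 1 := by
    intro x
    have : ∑ i ∈ Finset.range q, (F^[i] (x + 1) + -(i * c)) =
        ∑ i ∈ Finset.range q, (F^[i] x + -(i * c)) + q := by
      simp only [deg_one_iterate h1, Finset.sum_add_distrib]
      simp
      ring
    simp only [H, this, mul_add, inv_mul_cancel₀ hq'.ne', add_zero]
  have hHm : StrictMono H := by
    intro x y hxy
    simp only [H, add_zero]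
    refine mul_lt_mul_of_pos_left ?_ (inv_pos.2 hq')
    refine Finset.sum_lt_sum_of_nonempty (Finset.nonempty_range_iff.2 hq.ne') fun i _ => ?_
    have := hm.iterate i hxy
    linarith
  have hHc : Continuous H := by
    have : ∀ i, Continuous F^[i] := hcont.iterate
    fun_prop
  have hHs : Function.Surjective H := by
    have ht : ∀ y : ℝ, ∃ n : ℕ, y ≤ H n ∧ H ((-n : ℤ) : ℝ) ≤ y := by
      intro y
      obtain ⟨n, hn⟩ := exists_nat_ge |y - H 0|
      have a1 := deg_one_add_int hHm hH1 0 n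
      have a2 := deg_one_add_int hHm hH1 0 (-n)
      rw [zero_add] at a1 a2
      refine ⟨n, ?_, ?_⟩
      · have : H (n : ℝ) = H 0 + n := by exact_mod_cast a1
        rw [this]
        linarith [le_abs_self (y - H 0)]
      · rw [a2]
        push_cast
        linarith [neg_abs_le (y - H 0)]
    intro y
    obtain ⟨n, hn1, hn2⟩ := ht y
    exact mem_range_of_exists_le_of_exists_ge hHc ⟨_, hn2⟩ ⟨_, hn1⟩
  have hHloc : LocPL H := by
    have hit := locPL_iterate hPL.locPL hm.monotone hcont
    intro x
    constructor
    · exact (affGerm_affine ⊤ (q : ℝ)⁻¹ 0).comp (AffGerm.sum (fun i =>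
        ((hit i) x).1.add (by simpa using affGerm_affine _ 0 (-(i * c)))) q) tendsto_top
    · exact (affGerm_affine ⊤ (q : ℝ)⁻¹ 0).comp (AffGerm.sum (fun i =>
        ((hit i) x).2.add (by simpa using affGerm_affine _ 0 (-(i * c)))) q) tendsto_top
  obtain ⟨h, hh⟩ := exists_perm_of_lift hHm hH1 hHs
  refine ⟨(c : AddCircle (1 : ℝ)), h, ⟨H, ⟨hHm, hH1, exists_subdivision hHloc⟩, hh⟩, ?_⟩
  rw [mul_inv_eq_iff_eq_mul]
  ext u
  obtain ⟨x, rfl⟩ := QuotientAddGroup.mk_surjective u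
  change h (f (x : AddCircle (1 : ℝ))) = h (x : AddCircle (1 : ℝ)) + (c : AddCircle (1 : ℝ))
  rw [hl, hh, hh, hHF, AddCircle.coe_add]

/-! ### The rotation number as a conjugacy invariant -/

/-- `t` is the rotation number of the circle map `f`, whose `q`-th power is the identity: some
increasing degree one lift `F` of `f` satisfies `F^q = id + p` with `p/q = t` in `ℝ/ℤ`. -/
def HasRot (q : ℕ) (t : AddCircle (1 : ℝ)) (f : Equiv.Perm (AddCircle (1 : ℝ))) : Prop :=
  ∃ F : ℝ → ℝ, StrictMono F ∧ (∀ x, F (x + 1) = F x + 1) ∧ (∀ x : ℝ, f ↑x = ↑(F x)) ∧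
    ∃ p : ℤ, (∀ x, F^[q] x = x + p) ∧ ((p / q : ℝ) : AddCircle (1 : ℝ)) = t

theorem HasRot.conj {q : ℕ} {t : AddCircle (1 : ℝ)} {f g h : Equiv.Perm (AddCircle (1 : ℝ))}
    (hh : InPL h) (hfg : h * f * h⁻¹ = g) : HasRot q t f ↔ HasRot q t g := by
  obtain ⟨H, ⟨hm, h1, -⟩, hl⟩ := hh
  let e : ℝ ≃o ℝ := hm.orderIsoOfSurjective H (lift_surjective hm h1 hl)
  have he : ∀ x, e x = H x := fun x => rfl
  have hs1 : ∀ x, e.symm (x + 1) = e.symm x + 1 := by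
    intro x
    rw [OrderIso.symm_apply_eq, he, h1, ← he, e.apply_symm_apply]
  have hsl : ∀ x : ℝ, h⁻¹ (x : AddCircle (1 : ℝ)) = ((e.symm x : ℝ) : AddCircle (1 : ℝ)) := by
    intro x
    rw [Equiv.Perm.inv_eq_iff_eq, hl, ← he, e.apply_symm_apply]
  constructor
  · rintro ⟨F, hFm, hF1, hFl, p, hp, hpt⟩
    refine ⟨fun x => e (F (e.symm x)), fun x y hxy => e.strictMono (hFm (e.symm.strictMono hxy)),
      fun x => ?_, fun x => ?_, p, fun x => ?_, hpt⟩
    · simp only [hs1, hF1, he, h1]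
    · rw [← hfg, Equiv.Perm.mul_apply, Equiv.Perm.mul_apply, hsl, hFl, hl]
      rfl
    · have hsc : Function.Semiconj e F (fun x => e (F (e.symm x))) := fun x => by simp
      have := (hsc.iterate_right q).eq (e.symm x)
      rw [e.apply_symm_apply] at this
      rw [← this, hp, he, deg_one_add_int hm h1, ← he, e.apply_symm_apply]
  · rintro ⟨F, hFm, hF1, hFl, p, hp, hpt⟩
    have hgf : f = h⁻¹ * g * h := by rw [← hfg]; group
    refine ⟨fun x => e.symm (F (e x)), fun x y hxy => e.symm.strictMono (hFm (e.strictMono hxy)),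
      fun x => ?_, fun x => ?_, p, fun x => ?_, hpt⟩
    · simp only [he, h1, hF1, hs1]
    · rw [hgf, Equiv.Perm.mul_apply, Equiv.Perm.mul_apply, hl, hFl, hsl]
      rfl
    · have hsc : Function.Semiconj e.symm F (fun x => e.symm (F (e x))) := fun x => by simp
      have := (hsc.iterate_right q).eq (e x)
      rw [e.symm_apply_apply] at this
      rw [← this, hp, deg_one_add_int e.symm.strictMono hs1, e.symm_apply_apply]

theorem iterate_translation (r : ℝ) (n : ℕ) (x : ℝ) :
    (fun x : ℝ => x + r)^[n] x = x + n * r := by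
  rw [add_right_iterate_apply]
  simp

theorem hasRot_rotation {q : ℕ} (hq : 0 < q) {u : AddCircle (1 : ℝ)} (hu : q • u = 0)
    (t : AddCircle (1 : ℝ)) : HasRot q t (Equiv.addRight u) ↔ t = u := by
  have hq' : (q : ℝ) ≠ 0 := by exact_mod_cast hq.ne'
  obtain ⟨r, rfl⟩ := QuotientAddGroup.mk_surjective u
  constructor
  · rintro ⟨F, hm, h1, hl, p, hp, rfl⟩
    obtain ⟨k, hk⟩ := lift_rotation hm h1 r fun x => (hl x).symm
    have hF : F = fun x => x + (r + k) := funext hk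
    have h0 := hp 0
    rw [hF, iterate_translation] at h0
    refine (coe_circle_eq_iff _ r).2 ⟨k, ?_⟩
    field_simp
    linarith
  · rintro rfl
    have hu' : ((q * r : ℝ) : AddCircle (1 : ℝ)) = ((0 : ℝ) : AddCircle (1 : ℝ)) := by
      rw [← nsmul_eq_mul, AddCircle.coe_nsmul]
      exact hu
    obtain ⟨p, hp⟩ := (coe_circle_eq_iff _ _).1 hu'
    refine ⟨fun x => x + r, fun x y h => by simpa using h, fun x => by ring, fun x => rfl, p,
      fun x => ?_, ?_⟩
    · rw [iterate_translation, hp, zero_add]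
    · rw [zero_add] at hp
      rw [← hp, mul_div_cancel_left₀ _ hq']

/-- For every `q ≥ 2`, the number of conjugacy classes of elements of order `q` in
`PL⁺(S¹)` is exactly `φ(q)`, Euler's totient of `q`. -/
theorem card_conj_classes_in_PL_plus (q : ℕ) (hq : 2 ≤ q) :
    Nat.card (Quot (fun f g : {f : Equiv.Perm (AddCircle (1 : ℝ)) //
        InPL f ∧ orderOf f = q} =>
      ∃ h : Equiv.Perm (AddCircle (1 : ℝ)), InPL h ∧ h * f.1 * h⁻¹ = g.1)) =
    Nat.totient q := by
  have hq0 : 0 < q := by omega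
  have : Fact ((0 : ℝ) < 1) := ⟨one_pos⟩
  rw [← AddCircle.card_addOrderOf_eq_totient (p := (1 : ℝ)) (n := q)]
  symm
  refine Nat.card_eq_of_bijective (fun u : {u : AddCircle (1 : ℝ) // addOrderOf u = q} =>
    Quot.mk _ ⟨Equiv.addRight u.1, inPL_rotation u.1, (orderOf_rotation u.1).trans u.2⟩) ⟨?_, ?_⟩
  · intro u v huv
    -- `HasRot q u` descends to the quotient, as it is invariant under conjugation.
    have h := congrArg (Quot.lift (fun f => HasRot q u.1 f.1)
      fun f g ⟨h, hh, hfg⟩ => propext (HasRot.conj hh hfg)) huv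
    change HasRot q u.1 (Equiv.addRight u.1) = HasRot q u.1 (Equiv.addRight v.1) at h
    have hu : q • u.1 = 0 := addOrderOf_dvd_iff_nsmul_eq_zero.1 u.2.dvd
    have hv : q • v.1 = 0 := addOrderOf_dvd_iff_nsmul_eq_zero.1 v.2.dvd
    exact Subtype.ext ((hasRot_rotation hq0 hv u.1).1 (h ▸ (hasRot_rotation hq0 hu u.1).2 rfl))
  · intro c
    induction c using Quot.ind with
    | mk f =>
      obtain ⟨f, hf, hfo⟩ := f
      obtain ⟨u, h, hh, hu⟩ := exists_conj_rotation hq0 hf (by rw [← hfo, pow_orderOf_eq_one])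
      have huo : addOrderOf u = q := by
        rw [← orderOf_rotation, ← hu, ← hfo]
        exact MulEquiv.orderOf_eq (MulAut.conj h) f
      exact ⟨⟨u, huo⟩, (Quot.sound ⟨h, hh, hu⟩).symm⟩
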